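/- Let H be the moment matrix of a branching mechanism and assume H₁₁H₂₂ − H₁₂H₂₁ > 0 (det H > 0) and H₁₁ + H₂₂ < 0 (trace H < 0). Then there exist constants λ > 0 and ϑ > 0 such that for every t ≥ 0 and all x, y ∈ 𝕄 there exists a coupling Π of P_t(x,·) and P_t(y,·) with ∫_{𝕄×𝕄}(|u₁−v₁|+|u₂−v₂|) Π(du,dv) ≤ ϑ·|x−y|·e^{−λt}, where |x−y| is the Euclidean norm; consequently W₁(δ_xP_t, δ_yP_t) ≤ ϑ|x−y|e^{−λt}. -/

import Mathlib

open MeasureTheory Filter Set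

noncomputable section

/-- The state space `𝕄 = [0,∞) × ℕ`, as a subset of `ℝ²`. -/
def Mset : Set (ℝ × ℝ) := {z | 0 ≤ z.1 ∧ ∃ n : ℕ, z.2 = (n : ℝ)}

/-- The space `𝕄₋₁ = [0,∞) × (ℕ ∪ {-1})`, as a subset of `ℝ²`. -/
def Mm1set : Set (ℝ × ℝ) := {z | 0 ≤ z.1 ∧ ∃ n : ℤ, (-1 : ℤ) ≤ n ∧ z.2 = (n : ℝ)}

/-- The data of a branching mechanism `(Φ₁, Φ₂)` of a mixed state branching process. -/
structure BranchingMechanism where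
  a11 : ℝ
  a21 : ℝ
  alpha : ℝ
  a21_nonneg : 0 ≤ a21
  alpha_nonneg : 0 ≤ alpha
  n1 : Measure (ℝ × ℝ)
  n2 : Measure (ℝ × ℝ)
  n1_sigmaFinite : SigmaFinite n1
  n2_sigmaFinite : SigmaFinite n2
  /-- `n₁` is supported on `𝕄` -/
  n1_supp : n1 Msetᶜ = 0
  /-- `n₂` is supported on `𝕄₋₁` -/
  n2_supp : n2 Mm1setᶜ = 0
  /-- `n₁` does not charge the origin -/
  n1_zero : n1 {0} = 0
  /-- `n₂` does not charge the origin -/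
  n2_zero : n2 {0} = 0
  /-- `n₂([0,∞) × {-1}) < ∞` -/
  n2_neg1 : n2 {z : ℝ × ℝ | z.2 = -1} ≠ ⊤
  /-- `∫ (z₁ ∧ z₁² + z₂) n₁(dz) < ∞` -/
  n1_moment : ∫⁻ z, ENNReal.ofReal (min z.1 (z.1 ^ 2) + z.2) ∂n1 ≠ ⊤
  /-- `∫ (z₁ + |z₂|) n₂(dz) < ∞` -/
  n2_moment : ∫⁻ z, ENNReal.ofReal (z.1 + |z.2|) ∂n2 ≠ ⊤

/-- `Φ₁(λ) = -a₁₁λ₁ - αλ₁² - ∫ (e^{-⟨λ,z⟩} - 1 + λ₁z₁) n₁(dz)`. -/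
def mPhi1 (B : BranchingMechanism) (l : ℝ × ℝ) : ℝ :=
  -B.a11 * l.1 - B.alpha * l.1 ^ 2 -
    ∫ z, (Real.exp (-(l.1 * z.1 + l.2 * z.2)) - 1 + l.1 * z.1) ∂B.n1

/-- `Φ₂(λ) = a₂₁λ₁ + ∫ (1 - e^{-⟨λ,z⟩}) n₂(dz)`. -/
def mPhi2 (B : BranchingMechanism) (l : ℝ × ℝ) : ℝ :=
  B.a21 * l.1 + ∫ z, (1 - Real.exp (-(l.1 * z.1 + l.2 * z.2))) ∂B.n2


/-- `V : t ↦ V(t,λ)` is a continuous `[0,∞)²`-valued solution of the cumulant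
equations (3.8) with initial value `λ = l`. -/
def SolvesCumulant (B : BranchingMechanism) (l : ℝ × ℝ) (V : ℝ → ℝ × ℝ) : Prop :=
  ContinuousOn V (Ici 0) ∧
  (∀ t : ℝ, 0 ≤ t → 0 ≤ (V t).1 ∧ 0 ≤ (V t).2) ∧
  (∀ t : ℝ, 0 ≤ t →
    (V t).1 = l.1 + ∫ s in (0:ℝ)..t, mPhi1 B (V s) ∧
    (V t).2 = l.2 + ∫ s in (0:ℝ)..t, mPhi2 B (V s))

/-- `P` is the family of transition probabilities of the MSB-process with cumulant
`V`: each `P_t(x,·)` is a Borel probability measure on `𝕄` with Laplace transform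
`∫ e^{-⟨λ,y⟩} P_t(x,dy) = exp(-⟨x,V(t,λ)⟩)`. -/
def IsMSBTransition (V : ℝ → (ℝ × ℝ) → ℝ × ℝ)
    (P : ℝ → (ℝ × ℝ) → Measure (ℝ × ℝ)) : Prop :=
  ∀ t : ℝ, 0 ≤ t → ∀ x ∈ Mset,
    IsProbabilityMeasure (P t x) ∧ P t x Msetᶜ = 0 ∧
    ∀ l : ℝ × ℝ, 0 ≤ l.1 → 0 ≤ l.2 →
      ∫ y, Real.exp (-(l.1 * y.1 + l.2 * y.2)) ∂(P t x)
        = Real.exp (-(x.1 * (V t l).1 + x.2 * (V t l).2))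

/-- `π : t ↦ π(t,λ)` is a `[0,∞)²`-valued solution of the moment linear system
`dπ₁/dt = -a₁₁π₁ + π₂ ∫ z₂ n₁(dz)`,
`dπ₂/dt = a₂₁π₁ + ∫ (z₁π₁ + z₂π₂) n₂(dz)`, with `π(0,λ) = l`. -/
def SolvesMoment (B : BranchingMechanism) (l : ℝ × ℝ) (π : ℝ → ℝ × ℝ) : Prop :=
  π 0 = l ∧
  (∀ t : ℝ, 0 ≤ t → 0 ≤ (π t).1 ∧ 0 ≤ (π t).2) ∧
  (∀ t : ℝ, 0 ≤ t →
    HasDerivWithinAt (fun s => (π s).1)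
      (-B.a11 * (π t).1 + (π t).2 * ∫ z, z.2 ∂B.n1) (Ici 0) t ∧
    HasDerivWithinAt (fun s => (π s).2)
      (B.a21 * (π t).1 + ∫ z, (z.1 * (π t).1 + z.2 * (π t).2) ∂B.n2) (Ici 0) t)

/-- `Pc` is a coupling of the probability measures `μ` and `ν` on `ℝ²`. -/
def IsCoupling (Pc : Measure ((ℝ × ℝ) × (ℝ × ℝ))) (μ ν : Measure (ℝ × ℝ)) : Prop :=
  IsProbabilityMeasure Pc ∧ Pc.map Prod.fst = μ ∧ Pc.map Prod.snd = ν

/-- Entries of the moment matrix `H`. -/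
def H11 (B : BranchingMechanism) : ℝ := -B.a11
def H12 (B : BranchingMechanism) : ℝ := ∫ z, z.2 ∂B.n1
def H21 (B : BranchingMechanism) : ℝ := B.a21 + ∫ z, z.1 ∂B.n2
def H22 (B : BranchingMechanism) : ℝ := ∫ z, z.2 ∂B.n2

/-!
A branching population started from `x` is the sum of independent populations started from
`x ⊓ y` and from the excess `x - x ⊓ y`. Letting the populations started from `x` and `y` share the
part coming from `x ⊓ y` gives a coupling whose cost is at most the sum of the first moments of
the two excess populations.

First moments are read off the Laplace transform: since `(1 - e^{-εf}) / ε → f` as `ε ↓ 0`,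
Fatou's lemma bounds them by `x ↦ C e^{-rt} |x|₁` as soon as `‖V(t, (ε, ε))‖ ≤ C e^{-rt} ε` for
all `ε > 0`. By convexity of the exponential, `Φ(λ) ≤ Hλ` on the quadrant, so `V` is a subsolution
of the linear system with matrix `H`. As `H` has nonnegative off-diagonal entries, positive
determinant and negative trace, there is a positive row vector `w` with `w H ≤ -r w` for some
`r > 0`, and Grönwall's inequality makes `⟨w, V(t)⟩` decay like `e^{-rt}`.
-/

open scoped ENNReal Topology BoundedContinuousFunction

section LaplaceUniqueness

variable {X : Type*} [TopologicalSpace X] [PolishSpace X] [MeasurableSpace X] [BorelSpace X]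
  {μ ν : Measure X} [IsFiniteMeasure μ] [IsFiniteMeasure ν]

theorem measure_ext_of_forall_mem_submonoid_integral_eq {M : Submonoid (X →ᵇ ℝ)}
    (hsep : ∀ x y, x ≠ y → ∃ f ∈ M, f x ≠ f y)
    (h : ∀ f ∈ M, ∫ x, f x ∂μ = ∫ x, f x ∂ν) : μ = ν := by
  let A : StarSubalgebra ℝ (X →ᵇ ℝ) :=
    { Algebra.adjoin ℝ (M : Set (X →ᵇ ℝ)) with
      star_mem' := fun {f} hf ↦ by rwa [show star f = f by ext; simp] }
  have hMA : ∀ f ∈ M, f ∈ A := fun f hf ↦ Algebra.subset_adjoin hf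
  refine ext_of_forall_mem_subalgebra_integral_eq_of_polish (A := A) (fun x y hxy ↦ ?_)
    fun g hg ↦ ?_
  · obtain ⟨f, hf, hfxy⟩ := hsep x y hxy
    exact ⟨f, ⟨_, ⟨f, hMA f hf, rfl⟩, rfl⟩, hfxy⟩
  · -- `M` is closed under products, so its linear span is already the algebra it generates.
    replace hg : g ∈ Submodule.span ℝ (M : Set (X →ᵇ ℝ)) := by
      rw [← Submonoid.closure_eq M, ← Algebra.adjoin_eq_span]
      exact hg
    induction hg using Submodule.span_induction with
    | mem f hf => exact h f hf
    | zero => simp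
    | add f g _ _ hf hg =>
      simp only [BoundedContinuousFunction.coe_add, Pi.add_apply]
      rw [integral_add (f.integrable μ) (g.integrable μ),
        integral_add (f.integrable ν) (g.integrable ν), hf, hg]
    | smul a f _ hf =>
      simp only [BoundedContinuousFunction.coe_smul]
      rw [integral_smul, integral_smul, hf]

theorem measure_ext_of_forall_mem_integral_exp_neg_eq {S : Set X} (hS : IsClosed S)
    (hμ : ∀ᵐ x ∂μ, x ∈ S) (hν : ∀ᵐ x ∂ν, x ∈ S) {M : AddSubmonoid C(X, ℝ)}
    (hnonneg : ∀ f ∈ M, ∀ x ∈ S, 0 ≤ f x)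
    (hsep : ∀ x ∈ S, ∀ y ∈ S, x ≠ y → ∃ f ∈ M, f x ≠ f y)
    (h : ∀ f ∈ M, ∫ x, Real.exp (-f x) ∂μ = ∫ x, Real.exp (-f x) ∂ν) : μ = ν := by
  have : PolishSpace S := hS.polishSpace
  let N : Submonoid (S →ᵇ ℝ) :=
    { carrier := {g | ∃ f ∈ M, ∀ x, g x = Real.exp (-f x)}
      one_mem' := ⟨0, M.zero_mem, by simp⟩
      mul_mem' := by
        rintro _ _ ⟨f, hf, hf'⟩ ⟨g, hg, hg'⟩
        exact ⟨f + g, M.add_mem hf hg, fun x ↦ by simp [hf', hg', ← Real.exp_add, add_comm]⟩ }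
  suffices μ.comap ((↑) : S → X) = ν.comap (↑) by
    rw [← Measure.restrict_eq_self_of_ae_mem hμ, ← Measure.restrict_eq_self_of_ae_mem hν,
      ← map_comap_subtype_coe hS.measurableSet, this, map_comap_subtype_coe hS.measurableSet]
  refine measure_ext_of_forall_mem_submonoid_integral_eq (M := N) (fun x y hxy ↦ ?_) ?_
  · obtain ⟨f, hf, hfxy⟩ := hsep x x.2 y y.2 (Subtype.coe_injective.ne hxy)
    let g : S →ᵇ ℝ := .ofNormedAddCommGroup (fun x ↦ Real.exp (-f x)) (by fun_prop) 1 fun x ↦ by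
      simpa using hnonneg f hf x x.2
    exact ⟨g, ⟨f, hf, fun _ ↦ rfl⟩, by simpa [g] using hfxy⟩
  · rintro g ⟨f, hf, hgf⟩
    simp_rw [hgf]
    rw [integral_subtype_comap hS.measurableSet (fun x ↦ Real.exp (-f x)),
      integral_subtype_comap hS.measurableSet (fun x ↦ Real.exp (-f x)),
      Measure.restrict_eq_self_of_ae_mem hμ, Measure.restrict_eq_self_of_ae_mem hν, h f hf]

end LaplaceUniqueness

/-- The bivariate Laplace transform `l ↦ ∫ e^{-⟨l, y⟩} μ(dy)`, meant for measures `μ` carried by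
the quadrant `[0, ∞)²` and for `l` in that quadrant. -/
def laplace (μ : Measure (ℝ × ℝ)) (l : ℝ × ℝ) : ℝ :=
  ∫ y, Real.exp (-(l.1 * y.1 + l.2 * y.2)) ∂μ

theorem measure_ext_of_laplace_eq {μ ν : Measure (ℝ × ℝ)} [IsFiniteMeasure μ] [IsFiniteMeasure ν]
    (hμ : ∀ᵐ y ∂μ, 0 ≤ y) (hν : ∀ᵐ y ∂ν, 0 ≤ y)
    (h : ∀ l, 0 ≤ l → laplace μ l = laplace ν l) : μ = ν := by
  let M : AddSubmonoid C(ℝ × ℝ, ℝ) :=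
    { carrier := {f | ∃ l : ℝ × ℝ, 0 ≤ l ∧ ∀ y, f y = l.1 * y.1 + l.2 * y.2}
      zero_mem' := ⟨0, le_rfl, by simp⟩
      add_mem' := by
        rintro f g ⟨l, hl, hf⟩ ⟨k, hk, hg⟩
        refine ⟨l + k, add_nonneg hl hk, fun y ↦ ?_⟩
        simp only [ContinuousMap.add_apply, hf, hg, Prod.fst_add, Prod.snd_add]
        ring }
  refine measure_ext_of_forall_mem_integral_exp_neg_eq (isClosed_Ici (a := 0)) hμ hν (M := M)
    ?_ ?_ ?_
  · rintro f ⟨l, hl, hf⟩ y hy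
    rw [hf]
    exact add_nonneg (mul_nonneg hl.1 hy.1) (mul_nonneg hl.2 hy.2)
  · intro x _ y _ hxy
    by_contra! hM
    have hfst := hM ⟨Prod.fst, continuous_fst⟩ ⟨(1, 0), by simp [Prod.le_def], by simp⟩
    have hsnd := hM ⟨Prod.snd, continuous_snd⟩ ⟨(0, 1), by simp [Prod.le_def], by simp⟩
    exact hxy (Prod.ext hfst hsnd)
  · rintro f ⟨l, hl, hf⟩
    simpa only [hf, laplace] using h l hl

theorem laplace_conv (μ ν : Measure (ℝ × ℝ)) [SFinite μ] [SFinite ν] (l : ℝ × ℝ) :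
    laplace (μ ∗ ν) l = laplace μ l * laplace ν l := by
  simp only [laplace, Measure.conv]
  rw [integral_map (by fun_prop) (by fun_prop), ← integral_prod_mul]
  refine integral_congr_ae (.of_forall fun w ↦ ?_)
  simp only [← Real.exp_add, Prod.fst_add, Prod.snd_add]
  ring_nf

theorem ae_mem_conv {E : Type*} [AddMonoid E] [MeasurableSpace E] [MeasurableAdd₂ E] {S : Set E}
    (hS : MeasurableSet S) (hadd : ∀ x ∈ S, ∀ y ∈ S, x + y ∈ S) {μ ν : Measure E} [SFinite μ]
    [SFinite ν] (hμ : ∀ᵐ x ∂μ, x ∈ S) (hν : ∀ᵐ y ∂ν, y ∈ S) : ∀ᵐ z ∂(μ ∗ ν), z ∈ S := by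
  refine (ae_map_iff (by fun_prop) hS).2 ?_
  filter_upwards [Measure.quasiMeasurePreserving_fst.ae hμ,
    Measure.quasiMeasurePreserving_snd.ae hν] with w h₁ h₂ using hadd _ h₁ _ h₂

theorem lintegral_ofReal_le_of_one_sub_mul_le_integral_exp_neg {Ω : Type*} [MeasurableSpace Ω]
    {μ : Measure Ω} [IsProbabilityMeasure μ] {f : Ω → ℝ} (hf : AEMeasurable f μ) (hf₀ : 0 ≤ᵐ[μ] f)
    {C : ℝ} (hC : ∀ ε > 0, 1 - C * ε ≤ ∫ ω, Real.exp (-(ε * f ω)) ∂μ) :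
    ∫⁻ ω, ENNReal.ofReal (f ω) ∂μ ≤ ENNReal.ofReal C := by
  let q (ε : ℝ) (ω : Ω) : ℝ := ε⁻¹ * (1 - Real.exp (-(ε * f ω)))
  have tendsto_q (ω : Ω) : Tendsto (q · ω) (𝓝[>] 0) (𝓝 (f ω)) := by
    have hderiv : HasDerivAt (fun ε ↦ 1 - Real.exp (-(ε * f ω))) (f ω) 0 := by
      simpa using (((hasDerivAt_id (0 : ℝ)).mul_const (f ω)).neg.exp).const_sub 1
    simpa using hderiv.tendsto_slope_zero_right
  have lintegral_q_le : ∀ ε > 0, ∫⁻ ω, ENNReal.ofReal (q ε ω) ∂μ ≤ ENNReal.ofReal C := by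
    intro ε hε
    have exp_le_one : ∀ᵐ ω ∂μ, Real.exp (-(ε * f ω)) ≤ 1 := by
      filter_upwards [hf₀] with ω hω
      simpa using mul_nonneg hε.le hω
    have hint : Integrable (fun ω ↦ Real.exp (-(ε * f ω))) μ :=
      .of_bound (by fun_prop) 1 (by simpa using exp_le_one)
    have hint_q : Integrable (q ε) μ := ((integrable_const 1).sub hint).const_mul ε⁻¹
    rw [← ofReal_integral_eq_lintegral_ofReal hint_q]
    · refine ENNReal.ofReal_le_ofReal ?_
      rw [integral_const_mul, integral_sub (integrable_const 1) hint, inv_mul_le_iff₀ hε]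
      simp only [integral_const, probReal_univ, smul_eq_mul, mul_one]
      linarith [hC ε hε]
    · filter_upwards [exp_le_one] with ω hω
      exact mul_nonneg (inv_nonneg.2 hε.le) (sub_nonneg.2 hω)
  have eventually_le :
      ∀ᶠ ε in 𝓝[>] (0 : ℝ), ∫⁻ ω, ENNReal.ofReal (q ε ω) ∂μ ≤ ENNReal.ofReal C := by
    filter_upwards [self_mem_nhdsWithin] with ε hε using lintegral_q_le ε hε
  calc ∫⁻ ω, ENNReal.ofReal (f ω) ∂μ
      = ∫⁻ ω, liminf (fun ε ↦ ENNReal.ofReal (q ε ω)) (𝓝[>] 0) ∂μ :=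
        lintegral_congr fun ω ↦ (ENNReal.tendsto_ofReal (tendsto_q ω)).liminf_eq.symm
    _ ≤ liminf (fun ε ↦ ∫⁻ ω, ENNReal.ofReal (q ε ω) ∂μ) (𝓝[>] 0) :=
        lintegral_liminf_le' fun ε ↦ by fun_prop
    _ ≤ ENNReal.ofReal C :=
        liminf_le_of_frequently_le' eventually_le.frequently

section CommonShock

variable {E : Type*} [AddCommGroup E] [MeasurableSpace E] [MeasurableAdd₂ E]

/-- The joint law of `(Z + X, Z + Y)` for independent `Z ∼ ρ`, `X ∼ μ`, `Y ∼ ν`: a coupling of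
`ρ ∗ μ` and `ρ ∗ ν` in which the shared summand `Z` drops out of the difference. -/
def commonShockCoupling (ρ μ ν : Measure E) : Measure (E × E) :=
  (ρ.prod (μ.prod ν)).map fun w ↦ (w.1 + w.2.1, w.1 + w.2.2)

variable (ρ μ ν : Measure E)

theorem map_fst_commonShockCoupling [SFinite ρ] [SFinite μ] [IsProbabilityMeasure ν] :
    (commonShockCoupling ρ μ ν).map Prod.fst = ρ ∗ μ := by
  have hfst : (ρ.prod (μ.prod ν)).map (Prod.map id Prod.fst) = ρ.prod μ := by
    rw [← Measure.map_prod_map _ _ measurable_id measurable_fst]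
    simp
  rw [commonShockCoupling, Measure.map_map (by fun_prop) (by fun_prop), Measure.conv, ← hfst,
    Measure.map_map (by fun_prop) (by fun_prop)]
  rfl

theorem map_snd_commonShockCoupling [SFinite ρ] [IsProbabilityMeasure μ] [SFinite ν] :
    (commonShockCoupling ρ μ ν).map Prod.snd = ρ ∗ ν := by
  have hsnd : (ρ.prod (μ.prod ν)).map (Prod.map id Prod.snd) = ρ.prod ν := by
    rw [← Measure.map_prod_map _ _ measurable_id measurable_snd]
    simp
  rw [commonShockCoupling, Measure.map_map (by fun_prop) (by fun_prop), Measure.conv, ← hsnd,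
    Measure.map_map (by fun_prop) (by fun_prop)]
  rfl

theorem lintegral_sub_commonShockCoupling_le [MeasurableSub₂ E] [IsProbabilityMeasure ρ]
    [IsProbabilityMeasure μ] [IsProbabilityMeasure ν] {c : E → ℝ≥0∞} (hc : Measurable c)
    (hsub : ∀ u v, c (u - v) ≤ c u + c v) :
    ∫⁻ w, c (w.1 - w.2) ∂(commonShockCoupling ρ μ ν) ≤ ∫⁻ u, c u ∂μ + ∫⁻ v, c v ∂ν := by
  calc ∫⁻ w, c (w.1 - w.2) ∂(commonShockCoupling ρ μ ν)
      = ∫⁻ w, c (w.2.1 - w.2.2) ∂(ρ.prod (μ.prod ν)) := by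
        rw [commonShockCoupling, lintegral_map (by fun_prop) (by fun_prop)]
        simp only [add_sub_add_left_eq_sub]
    _ ≤ ∫⁻ w, c w.2.1 + c w.2.2 ∂(ρ.prod (μ.prod ν)) := lintegral_mono fun w ↦ hsub _ _
    _ = ∫⁻ u, c u ∂μ + ∫⁻ v, c v ∂ν := by
        rw [lintegral_add_left (by fun_prop), lintegral_prod _ (by fun_prop),
          lintegral_prod _ (by fun_prop)]
        simp only [lintegral_const, measure_univ, mul_one]
        rw [lintegral_prod _ (by fun_prop), lintegral_prod _ (by fun_prop)]
        simp

end CommonShock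

theorem continuousOn_integral_of_locally_dominated {E G Z : Type*} [NormedAddCommGroup E]
    [NormedAddCommGroup G] [NormedSpace ℝ G] [MeasurableSpace Z] {μ : Measure Z} {F : E → Z → G}
    {S : Set E} {bound : ℝ → Z → ℝ}
    (hF : ∀ l ∈ S, AEStronglyMeasurable (F l) μ) (hbound : ∀ K, Integrable (bound K) μ)
    (hF_le : ∀ K, ∀ l ∈ S, ‖l‖ ≤ K → ∀ᵐ z ∂μ, ‖F l z‖ ≤ bound K z)
    (hF_cont : ∀ᵐ z ∂μ, ContinuousOn (F · z) S) :
    ContinuousOn (fun l ↦ ∫ z, F l z ∂μ) S := by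
  intro l hl
  have norm_le : ∀ᶠ k in 𝓝[S] l, ‖k‖ ≤ ‖l‖ + 1 :=
    (continuous_norm.continuousWithinAt.eventually_lt_const (lt_add_one _)).mono fun _ ↦ le_of_lt
  refine continuousWithinAt_of_dominated (bound := bound (‖l‖ + 1)) ?_ ?_ (hbound _) ?_
  · filter_upwards [self_mem_nhdsWithin] with k hk using hF k hk
  · filter_upwards [self_mem_nhdsWithin, norm_le] with k hk hkl using hF_le _ k hk hkl
  · filter_upwards [hF_cont] with z hz using hz l hl

theorem hasDerivWithinAt_Ici_of_eq_add_integral {E : Type*} [NormedAddCommGroup E]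
    [NormedSpace ℝ E] [CompleteSpace E] {f g : ℝ → E} {a t : ℝ} {c : E}
    (hg : ContinuousOn g (Ici a)) (hf : ∀ s, a ≤ s → f s = c + ∫ r in a..s, g r) (ht : a ≤ t) :
    HasDerivWithinAt f (g t) (Ici t) t := by
  have hint : IntervalIntegrable g volume a t :=
    (hg.mono (uIcc_of_le ht ▸ Icc_subset_Ici_self)).intervalIntegrable
  have hmeas : StronglyMeasurableAtFilter g (𝓝[>] t) :=
    (hg.stronglyMeasurableAtFilter_nhdsWithin measurableSet_Ici t).filter_mono
      (nhdsWithin_mono t (Ioi_subset_Ici ht))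
  have hcont : ContinuousWithinAt g (Ioi t) t := (hg t ht).mono (Ioi_subset_Ici ht)
  exact ((intervalIntegral.integral_hasDerivWithinAt_right hint hmeas hcont).const_add c).congr
    (fun s hs ↦ hf s (ht.trans hs)) (hf t ht)

theorem le_mul_exp_of_deriv_right_le {f g : ℝ → ℝ} {a t K : ℝ} (hf : ContinuousOn f (Ici a))
    (hderiv : ∀ s, a ≤ s → HasDerivWithinAt f (g s) (Ici s) s)
    (hg : ∀ s, a ≤ s → g s ≤ K * f s) (ht : a ≤ t) :
    f t ≤ f a * Real.exp (K * (t - a)) := by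
  rw [← gronwallBound_ε0]
  refine le_gronwallBound_of_liminf_deriv_right_le (hf.mono Icc_subset_Ici_self)
    (fun s hs r hr ↦ ?_) le_rfl (fun s hs ↦ by simpa using hg s hs.1) t ⟨ht, le_rfl⟩
  simpa [slope_def_field, div_eq_inv_mul] using (hderiv s hs.1).liminf_right_slope_le hr

theorem exists_pos_left_subeigenvector {a b c d : ℝ} (hb : 0 ≤ b) (hc : 0 ≤ c)
    (hdet : 0 < a * d - b * c) (htr : a + d < 0) :
    ∃ p q r : ℝ, 0 < p ∧ 0 < q ∧ 0 < r ∧ p * a + q * c ≤ -r * p ∧ p * b + q * d ≤ -r * q := by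
  have had : 0 < a * d := by linarith [mul_nonneg hb hc]
  have ha : a < 0 := by
    by_contra! ha
    nlinarith
  have hd : d < 0 := neg_of_mul_pos_right had ha.le
  have hp : 0 < c - d := by linarith
  have hq : 0 < b - a := by linarith
  -- `(p, q) = -det • (1, 1) H⁻¹`, so that `(p, q) H = -det • (1, 1)`.
  refine ⟨c - d, b - a, (a * d - b * c) / (c - d + (b - a)), hp, hq, by positivity, ?_, ?_⟩
  · calc (c - d) * a + (b - a) * c = -(a * d - b * c) := by ring
      _ ≤ -((a * d - b * c) / (c - d + (b - a)) * (c - d)) := by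
        rw [neg_le_neg_iff, div_mul_eq_mul_div, div_le_iff₀ (by positivity)]
        gcongr
        linarith
      _ = _ := by ring
  · calc (c - d) * b + (b - a) * d = -(a * d - b * c) := by ring
      _ ≤ -((a * d - b * c) / (c - d + (b - a)) * (b - a)) := by
        rw [neg_le_neg_iff, div_mul_eq_mul_div, div_le_iff₀ (by positivity)]
        gcongr
        linarith
      _ = _ := by ring

theorem exp_neg_sub_one_add_le_min {x : ℝ} (hx : 0 ≤ x) :
    Real.exp (-x) - 1 + x ≤ min x (x ^ 2) := by
  have exp_le_one : Real.exp (-x) ≤ 1 := by simpa using hx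
  have exp_mul_le_one : Real.exp (-x) * (x + 1) ≤ 1 := by
    calc Real.exp (-x) * (x + 1) ≤ Real.exp (-x) * Real.exp x := by
          gcongr
          exact Real.add_one_le_exp x
      _ = 1 := by simp [← Real.exp_add]
  refine le_min (by linarith) ?_
  nlinarith [Real.exp_pos (-x)]

theorem abs_one_sub_exp_le {x K : ℝ} (hx : x ≤ K) (hK : 0 ≤ K) :
    |1 - Real.exp x| ≤ |x| * Real.exp K := by
  refine abs_le'.2 ⟨?_, ?_⟩
  · calc 1 - Real.exp x ≤ -x := by linarith [Real.add_one_le_exp x]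
      _ ≤ |x| * 1 := by simpa using neg_le_abs x
      _ ≤ |x| * Real.exp K := by
        gcongr
        exact Real.one_le_exp hK
  · calc -(1 - Real.exp x) = Real.exp x * (1 - Real.exp (-x)) := by
          rw [mul_sub, ← Real.exp_add]
          simp
      _ ≤ Real.exp x * x := by
        gcongr
        linarith [Real.add_one_le_exp (-x)]
      _ ≤ |x| * Real.exp K := by
        rw [mul_comm]
        gcongr
        exact le_abs_self x

theorem fst_le_norm (z : ℝ × ℝ) : z.1 ≤ ‖z‖ := (le_abs_self _).trans (norm_fst_le z)

theorem snd_le_norm (z : ℝ × ℝ) : z.2 ≤ ‖z‖ := (le_abs_self _).trans (norm_snd_le z)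

section IntegrandBounds

variable {l z : ℝ × ℝ} {K : ℝ}

theorem abs_exp_neg_sub_one_add_le (hl : 0 ≤ l) (hlK : ‖l‖ ≤ K) (hz : 0 ≤ z) :
    |Real.exp (-(l.1 * z.1 + l.2 * z.2)) - 1 + l.1 * z.1|
      ≤ (K + K ^ 2) * (min z.1 (z.1 ^ 2) + z.2) := by
  have hl₁ : 0 ≤ l.1 := hl.1
  have hl₂ : 0 ≤ l.2 := hl.2
  have hz₁ : 0 ≤ z.1 := hz.1
  have hz₂ : 0 ≤ z.2 := hz.2
  have hl₁K : l.1 ≤ K := (fst_le_norm l).trans hlK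
  have hl₂K : l.2 ≤ K := (snd_le_norm l).trans hlK
  have hK : 0 ≤ K := hl₁.trans hl₁K
  have hz₂_le : l.2 * z.2 ≤ (K + K ^ 2) * z.2 := by
    gcongr
    linarith [sq_nonneg K]
  refine abs_le.2 ⟨?_, ?_⟩
  · have : 0 ≤ (K + K ^ 2) * min z.1 (z.1 ^ 2) := by positivity
    linarith [Real.add_one_le_exp (-(l.1 * z.1 + l.2 * z.2))]
  · calc Real.exp (-(l.1 * z.1 + l.2 * z.2)) - 1 + l.1 * z.1
        ≤ Real.exp (-(l.1 * z.1)) - 1 + l.1 * z.1 := by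
          gcongr
          exact le_add_of_nonneg_right (mul_nonneg hl₂ hz₂)
      _ ≤ min (l.1 * z.1) ((l.1 * z.1) ^ 2) := exp_neg_sub_one_add_le_min (mul_nonneg hl₁ hz₁)
      _ ≤ min ((K + K ^ 2) * z.1) ((K + K ^ 2) * z.1 ^ 2) := by
        rw [mul_pow]
        gcongr
        · linarith [sq_nonneg K]
        · linarith [pow_le_pow_left₀ hl₁ hl₁K 2]
      _ = (K + K ^ 2) * min z.1 (z.1 ^ 2) := (mul_min_of_nonneg _ _ (by positivity)).symm
      _ ≤ (K + K ^ 2) * (min z.1 (z.1 ^ 2) + z.2) := by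
        gcongr
        exact le_add_of_nonneg_right hz₂

theorem abs_one_sub_exp_neg_le (hl : 0 ≤ l) (hlK : ‖l‖ ≤ K) (hz₁ : 0 ≤ z.1) (hz₂ : -1 ≤ z.2) :
    |1 - Real.exp (-(l.1 * z.1 + l.2 * z.2))| ≤ K * Real.exp K * (z.1 + |z.2|) := by
  have hl₁ : 0 ≤ l.1 := hl.1
  have hl₂ : 0 ≤ l.2 := hl.2
  have hl₁K : l.1 ≤ K := (fst_le_norm l).trans hlK
  have hl₂K : l.2 ≤ K := (snd_le_norm l).trans hlK
  have neg_pairing_le : -(l.1 * z.1 + l.2 * z.2) ≤ K := by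
    nlinarith [mul_nonneg hl₁ hz₁]
  calc |1 - Real.exp (-(l.1 * z.1 + l.2 * z.2))|
      ≤ |-(l.1 * z.1 + l.2 * z.2)| * Real.exp K :=
        abs_one_sub_exp_le neg_pairing_le (hl₁.trans hl₁K)
    _ ≤ (l.1 * z.1 + l.2 * |z.2|) * Real.exp K := by
      rw [abs_neg]
      gcongr
      refine (abs_add_le _ _).trans_eq ?_
      rw [abs_mul, abs_mul, abs_of_nonneg hl₁, abs_of_nonneg hl₂, abs_of_nonneg hz₁]
    _ ≤ (K * z.1 + K * |z.2|) * Real.exp K := by gcongr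
    _ = K * Real.exp K * (z.1 + |z.2|) := by ring

end IntegrandBounds

theorem nonneg_of_mem_Mset {x : ℝ × ℝ} (hx : x ∈ Mset) : 0 ≤ x := by
  obtain ⟨hx₁, n, hn⟩ := hx
  exact ⟨hx₁, hn ▸ n.cast_nonneg⟩

theorem add_mem_Mset {x y : ℝ × ℝ} (hx : x ∈ Mset) (hy : y ∈ Mset) : x + y ∈ Mset := by
  obtain ⟨hx₁, n, hn⟩ := hx
  obtain ⟨hy₁, m, hm⟩ := hy
  exact ⟨add_nonneg hx₁ hy₁, n + m, by simp [hn, hm]⟩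

theorem inf_mem_Mset {x y : ℝ × ℝ} (hx : x ∈ Mset) (hy : y ∈ Mset) : x ⊓ y ∈ Mset := by
  obtain ⟨hx₁, n, hn⟩ := hx
  obtain ⟨hy₁, m, hm⟩ := hy
  exact ⟨le_min hx₁ hy₁, min n m, by simp [hn, hm]⟩

theorem sub_mem_Mset {x y : ℝ × ℝ} (hx : x ∈ Mset) (hy : y ∈ Mset) (hyx : y ≤ x) :
    x - y ∈ Mset := by
  obtain ⟨-, n, hn⟩ := hx
  obtain ⟨-, m, hm⟩ := hy
  have hmn : m ≤ n := by
    have := hyx.2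
    rwa [hn, hm, Nat.cast_le] at this
  exact ⟨sub_nonneg.2 hyx.1, n - m, by simp [hn, hm, Nat.cast_sub hmn]⟩

namespace BranchingMechanism

variable (B : BranchingMechanism)

theorem ae_n1_nonneg : ∀ᵐ z ∂B.n1, 0 ≤ z := by
  have hmem : ∀ᵐ z ∂B.n1, z ∈ Mset := B.n1_supp
  filter_upwards [hmem] with z hz using nonneg_of_mem_Mset hz

theorem ae_n2_nonneg_and_neg_one_le : ∀ᵐ z ∂B.n2, 0 ≤ z.1 ∧ -1 ≤ z.2 := by
  have hmem : ∀ᵐ z ∂B.n2, z ∈ Mm1set := B.n2_supp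
  filter_upwards [hmem] with z ⟨hz₁, n, hn, hz₂⟩
  exact ⟨hz₁, hz₂ ▸ mod_cast hn⟩

theorem integrable_n1_min_add : Integrable (fun z ↦ min z.1 (z.1 ^ 2) + z.2) B.n1 := by
  refine (lintegral_ofReal_ne_top_iff_integrable (by fun_prop) ?_).1 B.n1_moment
  filter_upwards [B.ae_n1_nonneg] with z hz
  exact add_nonneg (le_min hz.1 (sq_nonneg _)) hz.2

theorem integrable_n2_fst_add_abs_snd : Integrable (fun z ↦ z.1 + |z.2|) B.n2 := by
  refine (lintegral_ofReal_ne_top_iff_integrable (by fun_prop) ?_).1 B.n2_moment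
  filter_upwards [B.ae_n2_nonneg_and_neg_one_le] with z hz
  exact add_nonneg hz.1 (abs_nonneg _)

theorem integrable_n1_snd : Integrable Prod.snd B.n1 := by
  refine B.integrable_n1_min_add.mono' (by fun_prop) ?_
  filter_upwards [B.ae_n1_nonneg] with z hz
  rw [Real.norm_of_nonneg hz.2]
  exact le_add_of_nonneg_left (le_min hz.1 (sq_nonneg _))

theorem integrable_n2_fst : Integrable Prod.fst B.n2 := by
  refine B.integrable_n2_fst_add_abs_snd.mono' (by fun_prop) ?_
  filter_upwards [B.ae_n2_nonneg_and_neg_one_le] with z hz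
  rw [Real.norm_of_nonneg hz.1]
  exact le_add_of_nonneg_right (abs_nonneg _)

theorem integrable_n2_snd : Integrable Prod.snd B.n2 := by
  refine B.integrable_n2_fst_add_abs_snd.mono' (by fun_prop) ?_
  filter_upwards [B.ae_n2_nonneg_and_neg_one_le] with z hz
  exact le_add_of_nonneg_left hz.1

theorem H12_nonneg : 0 ≤ H12 B :=
  integral_nonneg_of_ae (B.ae_n1_nonneg.mono fun _ hz ↦ hz.2)

theorem H21_nonneg : 0 ≤ H21 B :=
  add_nonneg B.a21_nonneg
    (integral_nonneg_of_ae (B.ae_n2_nonneg_and_neg_one_le.mono fun _ hz ↦ hz.1))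

theorem ae_n1_norm_integrand_le {l : ℝ × ℝ} {K : ℝ} (hl : 0 ≤ l) (hlK : ‖l‖ ≤ K) :
    ∀ᵐ z ∂B.n1, ‖Real.exp (-(l.1 * z.1 + l.2 * z.2)) - 1 + l.1 * z.1‖
      ≤ (K + K ^ 2) * (min z.1 (z.1 ^ 2) + z.2) :=
  B.ae_n1_nonneg.mono fun _ hz ↦ abs_exp_neg_sub_one_add_le hl hlK hz

theorem ae_n2_norm_integrand_le {l : ℝ × ℝ} {K : ℝ} (hl : 0 ≤ l) (hlK : ‖l‖ ≤ K) :
    ∀ᵐ z ∂B.n2, ‖1 - Real.exp (-(l.1 * z.1 + l.2 * z.2))‖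
      ≤ K * Real.exp K * (z.1 + |z.2|) :=
  B.ae_n2_nonneg_and_neg_one_le.mono fun _ hz ↦ abs_one_sub_exp_neg_le hl hlK hz.1 hz.2

theorem continuousOn_mPhi1 : ContinuousOn (mPhi1 B) (Ici 0) := by
  refine ContinuousOn.sub (by fun_prop) (continuousOn_integral_of_locally_dominated
    (fun _ _ ↦ by fun_prop) (fun K ↦ B.integrable_n1_min_add.const_mul (K + K ^ 2))
    (fun _ _ hl hlK ↦ B.ae_n1_norm_integrand_le hl hlK) (.of_forall fun _ ↦ by fun_prop))

theorem continuousOn_mPhi2 : ContinuousOn (mPhi2 B) (Ici 0) := by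
  refine ContinuousOn.add (by fun_prop) (continuousOn_integral_of_locally_dominated
    (fun _ _ ↦ by fun_prop) (fun K ↦ B.integrable_n2_fst_add_abs_snd.const_mul (K * Real.exp K))
    (fun _ _ hl hlK ↦ B.ae_n2_norm_integrand_le hl hlK) (.of_forall fun _ ↦ by fun_prop))

theorem mPhi1_le {l : ℝ × ℝ} (hl : 0 ≤ l) : mPhi1 B l ≤ H11 B * l.1 + H12 B * l.2 := by
  have hint : Integrable (fun z ↦ Real.exp (-(l.1 * z.1 + l.2 * z.2)) - 1 + l.1 * z.1) B.n1 :=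
    (B.integrable_n1_min_add.const_mul _).mono' (by fun_prop)
      (B.ae_n1_norm_integrand_le hl le_rfl)
  have neg_le_integral : -(l.2 * H12 B)
      ≤ ∫ z, (Real.exp (-(l.1 * z.1 + l.2 * z.2)) - 1 + l.1 * z.1) ∂B.n1 := by
    rw [H12, ← integral_const_mul, ← integral_neg]
    refine integral_mono (B.integrable_n1_snd.const_mul l.2).neg hint fun z ↦ ?_
    dsimp only
    linarith [Real.add_one_le_exp (-(l.1 * z.1 + l.2 * z.2))]
  rw [mPhi1, H11]
  linarith [mul_nonneg B.alpha_nonneg (sq_nonneg l.1)]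

theorem mPhi2_le {l : ℝ × ℝ} (hl : 0 ≤ l) : mPhi2 B l ≤ H21 B * l.1 + H22 B * l.2 := by
  have hint : Integrable (fun z ↦ 1 - Real.exp (-(l.1 * z.1 + l.2 * z.2))) B.n2 :=
    (B.integrable_n2_fst_add_abs_snd.const_mul _).mono' (by fun_prop)
      (B.ae_n2_norm_integrand_le hl le_rfl)
  have hfst := B.integrable_n2_fst.const_mul l.1
  have hsnd := B.integrable_n2_snd.const_mul l.2
  have integral_le : ∫ z, (1 - Real.exp (-(l.1 * z.1 + l.2 * z.2))) ∂B.n2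
      ≤ l.1 * (∫ z, z.1 ∂B.n2) + l.2 * H22 B := by
    rw [H22, ← integral_const_mul, ← integral_const_mul, ← integral_add hfst hsnd]
    refine integral_mono hint (hfst.add hsnd) fun z ↦ ?_
    dsimp only
    linarith [Real.add_one_le_exp (-(l.1 * z.1 + l.2 * z.2))]
  rw [mPhi2, H21]
  linarith

end BranchingMechanism

namespace SolvesCumulant

variable {B : BranchingMechanism} {l : ℝ × ℝ} {V : ℝ → ℝ × ℝ} {t : ℝ}

theorem mapsTo_Ici (hV : SolvesCumulant B l V) : MapsTo V (Ici 0) (Ici 0) := hV.2.1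

theorem apply_zero (hV : SolvesCumulant B l V) : V 0 = l :=
  Prod.ext (by simpa using (hV.2.2 0 le_rfl).1) (by simpa using (hV.2.2 0 le_rfl).2)

theorem hasDerivWithinAt_fst (hV : SolvesCumulant B l V) (ht : 0 ≤ t) :
    HasDerivWithinAt (fun s ↦ (V s).1) (mPhi1 B (V t)) (Ici t) t :=
  hasDerivWithinAt_Ici_of_eq_add_integral (g := fun s ↦ mPhi1 B (V s))
    (B.continuousOn_mPhi1.comp hV.1 hV.mapsTo_Ici) (fun s hs ↦ (hV.2.2 s hs).1) ht

theorem hasDerivWithinAt_snd (hV : SolvesCumulant B l V) (ht : 0 ≤ t) :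
    HasDerivWithinAt (fun s ↦ (V s).2) (mPhi2 B (V t)) (Ici t) t :=
  hasDerivWithinAt_Ici_of_eq_add_integral (g := fun s ↦ mPhi2 B (V s))
    (B.continuousOn_mPhi2.comp hV.1 hV.mapsTo_Ici) (fun s hs ↦ (hV.2.2 s hs).2) ht

theorem weighted_sum_le_mul_exp (hV : SolvesCumulant B l V) {p q K : ℝ} (hp : 0 ≤ p) (hq : 0 ≤ q)
    (hpK : p * H11 B + q * H21 B ≤ K * p) (hqK : p * H12 B + q * H22 B ≤ K * q) (ht : 0 ≤ t) :
    p * (V t).1 + q * (V t).2 ≤ (p * l.1 + q * l.2) * Real.exp (K * t) := by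
  have hderiv (s : ℝ) (hs : 0 ≤ s) : HasDerivWithinAt (fun s ↦ p * (V s).1 + q * (V s).2)
      (p * mPhi1 B (V s) + q * mPhi2 B (V s)) (Ici s) s :=
    ((hV.hasDerivWithinAt_fst hs).const_mul p).add ((hV.hasDerivWithinAt_snd hs).const_mul q)
  have drift_le (s : ℝ) (hs : 0 ≤ s) :
      p * mPhi1 B (V s) + q * mPhi2 B (V s) ≤ K * (p * (V s).1 + q * (V s).2) := by
    have hVs := hV.mapsTo_Ici hs
    calc p * mPhi1 B (V s) + q * mPhi2 B (V s)
        ≤ p * (H11 B * (V s).1 + H12 B * (V s).2) + q * (H21 B * (V s).1 + H22 B * (V s).2) := by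
          gcongr
          exacts [B.mPhi1_le hVs, B.mPhi2_le hVs]
      _ = (p * H11 B + q * H21 B) * (V s).1 + (p * H12 B + q * H22 B) * (V s).2 := by ring
      _ ≤ K * p * (V s).1 + K * q * (V s).2 := by
          gcongr
          exacts [hVs.1, hVs.2]
      _ = K * (p * (V s).1 + q * (V s).2) := by ring
  simpa [hV.apply_zero] using le_mul_exp_of_deriv_right_le
    (((continuous_fst.comp_continuousOn hV.1).const_mul p).add
      ((continuous_snd.comp_continuousOn hV.1).const_mul q)) hderiv drift_le ht

end SolvesCumulant

theorem BranchingMechanism.exists_norm_cumulant_le_mul_exp (B : BranchingMechanism)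
    (hdet : 0 < H11 B * H22 B - H12 B * H21 B) (htr : H11 B + H22 B < 0) :
    ∃ r > 0, ∃ C > 0, ∀ l V, SolvesCumulant B l V → ∀ t, 0 ≤ t →
      ‖V t‖ ≤ C * ‖l‖ * Real.exp (-r * t) := by
  obtain ⟨p, q, r, hp, hq, hr, hpr, hqr⟩ :=
    exists_pos_left_subeigenvector B.H12_nonneg B.H21_nonneg hdet htr
  have hpq : 0 < min p q := lt_min hp hq
  refine ⟨r, hr, (p + q) / min p q, by positivity, fun l V hV t ht ↦ ?_⟩
  have hVt : 0 ≤ (V t).1 ∧ 0 ≤ (V t).2 := hV.2.1 t ht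
  have norm_le : ‖V t‖ ≤ (V t).1 + (V t).2 := by
    rw [Prod.norm_def, Real.norm_of_nonneg hVt.1, Real.norm_of_nonneg hVt.2]
    exact max_le_add_of_nonneg hVt.1 hVt.2
  suffices min p q * ‖V t‖ ≤ (p + q) * ‖l‖ * Real.exp (-r * t) by
    rwa [div_mul_eq_mul_div, div_mul_eq_mul_div, le_div_iff₀' hpq]
  calc min p q * ‖V t‖ ≤ min p q * (V t).1 + min p q * (V t).2 := by
        rw [← mul_add]
        gcongr
    _ ≤ p * (V t).1 + q * (V t).2 := by
      gcongr
      exacts [hVt.1, min_le_left p q, hVt.2, min_le_right p q]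
    _ ≤ (p * l.1 + q * l.2) * Real.exp (-r * t) :=
      hV.weighted_sum_le_mul_exp hp.le hq.le hpr hqr ht
    _ ≤ (p * ‖l‖ + q * ‖l‖) * Real.exp (-r * t) := by
      gcongr
      exacts [fst_le_norm l, snd_le_norm l]
    _ = (p + q) * ‖l‖ * Real.exp (-r * t) := by ring

/-- The `ℓ¹` norm on `ℝ²`, the cost function of the transport problem; the norm instance of
`ℝ × ℝ` is the sup norm. -/
def l1Norm (z : ℝ × ℝ) : ℝ := |z.1| + |z.2|

theorem measurable_l1Norm : Measurable l1Norm := by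
  unfold l1Norm
  fun_prop

theorem l1Norm_nonneg (z : ℝ × ℝ) : 0 ≤ l1Norm z := by
  unfold l1Norm
  positivity

theorem l1Norm_of_nonneg {z : ℝ × ℝ} (hz : 0 ≤ z) : l1Norm z = z.1 + z.2 := by
  rw [l1Norm, abs_of_nonneg hz.1, abs_of_nonneg hz.2]

theorem l1Norm_sub_le (u v : ℝ × ℝ) : l1Norm (u - v) ≤ l1Norm u + l1Norm v := by
  calc l1Norm (u - v) ≤ |u.1| + |v.1| + (|u.2| + |v.2|) :=
        add_le_add (abs_sub _ _) (abs_sub _ _)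
    _ = l1Norm u + l1Norm v := by
      rw [l1Norm, l1Norm]
      ring

theorem l1Norm_sub_inf_add_l1Norm_sub_inf (x y : ℝ × ℝ) :
    l1Norm (x - x ⊓ y) + l1Norm (y - x ⊓ y) = l1Norm (x - y) := by
  have key (a b : ℝ) : a - min a b + (b - min a b) = |a - b| := by
    linarith [max_sub_min_eq_abs' a b, min_add_max a b]
  rw [l1Norm_of_nonneg (sub_nonneg.2 inf_le_left), l1Norm_of_nonneg (sub_nonneg.2 inf_le_right)]
  calc _ = x.1 - min x.1 y.1 + (y.1 - min x.1 y.1) + (x.2 - min x.2 y.2 + (y.2 - min x.2 y.2)) :=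
        add_add_add_comm _ _ _ _
    _ = l1Norm (x - y) := by
      rw [key, key]
      rfl

theorem l1Norm_le_two_mul_sqrt (z : ℝ × ℝ) : l1Norm z ≤ 2 * √(z.1 ^ 2 + z.2 ^ 2) := by
  have hfst : |z.1| ≤ √(z.1 ^ 2 + z.2 ^ 2) := Real.abs_le_sqrt (by linarith [sq_nonneg z.2])
  have hsnd : |z.2| ≤ √(z.1 ^ 2 + z.2 ^ 2) := Real.abs_le_sqrt (by linarith [sq_nonneg z.1])
  rw [l1Norm]
  linarith

namespace IsMSBTransition

variable {V : ℝ → (ℝ × ℝ) → ℝ × ℝ} {P : ℝ → (ℝ × ℝ) → Measure (ℝ × ℝ)} {t : ℝ} {x y : ℝ × ℝ}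

theorem ae_nonneg (hP : IsMSBTransition V P) (ht : 0 ≤ t) (hx : x ∈ Mset) :
    ∀ᵐ u ∂(P t x), 0 ≤ u := by
  have hmem : ∀ᵐ u ∂(P t x), u ∈ Mset := (hP t ht x hx).2.1
  filter_upwards [hmem] with u hu using nonneg_of_mem_Mset hu

theorem laplace_eq (hP : IsMSBTransition V P) (ht : 0 ≤ t) (hx : x ∈ Mset) {l : ℝ × ℝ}
    (hl : 0 ≤ l) :
    laplace (P t x) l = Real.exp (-(x.1 * (V t l).1 + x.2 * (V t l).2)) :=
  (hP t ht x hx).2.2 l hl.1 hl.2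

theorem add_eq_conv (hP : IsMSBTransition V P) (ht : 0 ≤ t) (hx : x ∈ Mset) (hy : y ∈ Mset) :
    P t (x + y) = P t x ∗ P t y := by
  have hxy := add_mem_Mset hx hy
  have := (hP t ht x hx).1
  have := (hP t ht y hy).1
  have := (hP t ht (x + y) hxy).1
  refine measure_ext_of_laplace_eq (hP.ae_nonneg ht hxy) ?_ fun l hl ↦ ?_
  · exact ae_mem_conv (S := Ici 0) measurableSet_Ici (fun u hu v hv ↦ add_nonneg hu hv)
      (hP.ae_nonneg ht hx) (hP.ae_nonneg ht hy)
  · rw [laplace_conv, hP.laplace_eq ht hxy hl, hP.laplace_eq ht hx hl, hP.laplace_eq ht hy hl,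
      ← Real.exp_add, Prod.fst_add, Prod.snd_add]
    ring_nf

theorem lintegral_l1Norm_le (hP : IsMSBTransition V P) (ht : 0 ≤ t) {D : ℝ}
    (hD : ∀ ε > 0, ‖V t (ε, ε)‖ ≤ D * ε) (hx : x ∈ Mset) :
    ∫⁻ u, ENNReal.ofReal (l1Norm u) ∂(P t x) ≤ ENNReal.ofReal (D * l1Norm x) := by
  have := (hP t ht x hx).1
  refine lintegral_ofReal_le_of_one_sub_mul_le_integral_exp_neg measurable_l1Norm.aemeasurable
    (.of_forall l1Norm_nonneg) fun ε hε ↦ ?_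
  have hx₀ := nonneg_of_mem_Mset hx
  have hfst : (V t (ε, ε)).1 ≤ D * ε := (fst_le_norm _).trans (hD ε hε)
  have hsnd : (V t (ε, ε)).2 ≤ D * ε := (snd_le_norm _).trans (hD ε hε)
  have pairing_le : x.1 * (V t (ε, ε)).1 + x.2 * (V t (ε, ε)).2 ≤ D * l1Norm x * ε := by
    rw [l1Norm_of_nonneg hx₀]
    linarith [mul_le_mul_of_nonneg_left hfst hx₀.1, mul_le_mul_of_nonneg_left hsnd hx₀.2]
  calc 1 - D * l1Norm x * ε ≤ Real.exp (-(x.1 * (V t (ε, ε)).1 + x.2 * (V t (ε, ε)).2)) := by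
        linarith [Real.add_one_le_exp (-(x.1 * (V t (ε, ε)).1 + x.2 * (V t (ε, ε)).2))]
    _ = laplace (P t x) (ε, ε) := (hP.laplace_eq ht hx ⟨hε.le, hε.le⟩).symm
    _ = ∫ u, Real.exp (-(ε * l1Norm u)) ∂(P t x) := by
      refine integral_congr_ae ?_
      filter_upwards [hP.ae_nonneg ht hx] with u hu
      rw [l1Norm_of_nonneg hu, mul_add]

theorem exists_isCoupling_lintegral_l1Norm_sub_le (hP : IsMSBTransition V P) (ht : 0 ≤ t) {D : ℝ}
    (hD : ∀ ε > 0, ‖V t (ε, ε)‖ ≤ D * ε) (hx : x ∈ Mset) (hy : y ∈ Mset) :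
    ∃ Q, IsCoupling Q (P t x) (P t y) ∧
      ∫⁻ w, ENNReal.ofReal (l1Norm (w.1 - w.2)) ∂Q ≤ ENNReal.ofReal (D * l1Norm (x - y)) := by
  have hm := inf_mem_Mset hx hy
  have hx' := sub_mem_Mset hx hm inf_le_left
  have hy' := sub_mem_Mset hy hm inf_le_right
  have := (hP t ht _ hm).1
  have := (hP t ht _ hx').1
  have := (hP t ht _ hy').1
  have hPx : P t x = P t (x ⊓ y) ∗ P t (x - x ⊓ y) := by
    rw [← hP.add_eq_conv ht hm hx', add_sub_cancel]
  have hPy : P t y = P t (x ⊓ y) ∗ P t (y - x ⊓ y) := by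
    rw [← hP.add_eq_conv ht hm hy', add_sub_cancel]
  have hD₀ : 0 ≤ D := by simpa using (norm_nonneg _).trans (hD 1 one_pos)
  refine ⟨commonShockCoupling (P t (x ⊓ y)) (P t (x - x ⊓ y)) (P t (y - x ⊓ y)),
    ⟨Measure.isProbabilityMeasure_map (by fun_prop), ?_, ?_⟩, ?_⟩
  · rw [map_fst_commonShockCoupling, hPx]
  · rw [map_snd_commonShockCoupling, hPy]
  · calc _ ≤ ∫⁻ u, ENNReal.ofReal (l1Norm u) ∂(P t (x - x ⊓ y))
          + ∫⁻ v, ENNReal.ofReal (l1Norm v) ∂(P t (y - x ⊓ y)) :=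
          lintegral_sub_commonShockCoupling_le _ _ _ measurable_l1Norm.ennreal_ofReal fun u v ↦
            (ENNReal.ofReal_le_ofReal (l1Norm_sub_le u v)).trans ENNReal.ofReal_add_le
      _ ≤ ENNReal.ofReal (D * l1Norm (x - x ⊓ y)) + ENNReal.ofReal (D * l1Norm (y - x ⊓ y)) :=
          add_le_add (hP.lintegral_l1Norm_le ht hD hx') (hP.lintegral_l1Norm_le ht hD hy')
      _ = ENNReal.ofReal (D * l1Norm (x - y)) := by
        rw [← ENNReal.ofReal_add (mul_nonneg hD₀ (l1Norm_nonneg _))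
          (mul_nonneg hD₀ (l1Norm_nonneg _)), ← mul_add, l1Norm_sub_inf_add_l1Norm_sub_inf]

end IsMSBTransition

/-- If `det H > 0` and `trace H < 0`, then there are `λ, ϑ > 0` such
that for all `t ≥ 0` and `x, y ∈ 𝕄` some coupling of `P_t(x,·)` and `P_t(y,·)` has
cost at most `ϑ |x-y| e^{-λt}`, whence `W₁(δₓP_t, δ_yP_t) ≤ ϑ |x-y| e^{-λt}`. -/
theorem exponential_ergodicity_MSB (B : BranchingMechanism)
    (V : ℝ → (ℝ × ℝ) → ℝ × ℝ)
    (hV : ∀ l : ℝ × ℝ, 0 ≤ l.1 → 0 ≤ l.2 → SolvesCumulant B l (fun t => V t l))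
    (P : ℝ → (ℝ × ℝ) → Measure (ℝ × ℝ))
    (hP : IsMSBTransition V P)
    (hdet : H11 B * H22 B - H12 B * H21 B > 0)
    (htr : H11 B + H22 B < 0) :
    ∃ lam : ℝ, 0 < lam ∧ ∃ θ : ℝ, 0 < θ ∧
      ∀ t : ℝ, 0 ≤ t → ∀ x ∈ Mset, ∀ y ∈ Mset,
        ∃ Pc : Measure ((ℝ × ℝ) × (ℝ × ℝ)), IsCoupling Pc (P t x) (P t y) ∧
          ∫⁻ w, ENNReal.ofReal (|w.1.1 - w.2.1| + |w.1.2 - w.2.2|) ∂Pc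
            ≤ ENNReal.ofReal
                (θ * Real.sqrt ((x.1 - y.1) ^ 2 + (x.2 - y.2) ^ 2) *
                  Real.exp (-lam * t)) := by
  obtain ⟨r, hr, C, hC, norm_V_le⟩ := B.exists_norm_cumulant_le_mul_exp hdet htr
  refine ⟨r, hr, C * 2, by positivity, fun t ht x hx y hy ↦ ?_⟩
  have hD (ε : ℝ) (hε : ε > 0) : ‖V t (ε, ε)‖ ≤ C * Real.exp (-r * t) * ε := by
    calc ‖V t (ε, ε)‖ ≤ C * ‖(ε, ε)‖ * Real.exp (-r * t) :=
          norm_V_le (ε, ε) (V · (ε, ε)) (hV (ε, ε) hε.le hε.le) t ht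
      _ = C * Real.exp (-r * t) * ε := by
        rw [Prod.norm_mk, max_self, Real.norm_of_nonneg hε.le]
        ring
  obtain ⟨Q, hQ, cost_le⟩ := hP.exists_isCoupling_lintegral_l1Norm_sub_le ht hD hx hy
  refine ⟨Q, hQ, cost_le.trans (ENNReal.ofReal_le_ofReal ?_)⟩
  calc C * Real.exp (-r * t) * l1Norm (x - y)
      ≤ C * Real.exp (-r * t) * (2 * √((x.1 - y.1) ^ 2 + (x.2 - y.2) ^ 2)) := by
        gcongr
        exact l1Norm_le_two_mul_sqrt (x - y)
    _ = C * 2 * √((x.1 - y.1) ^ 2 + (x.2 - y.2) ^ 2) * Real.exp (-r * t) := by ring
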